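/- For every positive integer n there exists a constant α_n > 0, depending only on n, with the following property: for every r > 0 and every family of points (p_j)_{j ∈ ℤⁿ} with p_j ∈ B((4r j₁, …, 4r j_n), r) for each j = (j₁,…,j_n) ∈ ℤⁿ, there exists a smooth diffeomorphism ψ from ℝⁿ \ {p_j : j ∈ ℤⁿ} onto ℝⁿ \ 4rℤⁿ such that ‖v‖² ≤ α_n · ‖Dψ_x(v)‖² for every x ∈ ℝⁿ \ {p_j : j ∈ ℤⁿ} and every v ∈ ℝⁿ, where Dψ_x denotes the derivative of ψ at x (i.e. the flat metric is bounded above by α_n times the pullback under ψ of the flat metric). -/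

import Mathlib

open Set Metric

noncomputable section

abbrev Euc (n : ℕ) := EuclideanSpace ℝ (Fin n)

/-- The rescaled lattice `4rℤⁿ ⊆ ℝⁿ`. -/
def scaledLattice (n : ℕ) (r : ℝ) : Set (Euc n) :=
  {x : Euc n | ∃ j : Fin n → ℤ, x = fun k => 4 * r * (j k : ℝ)}

/-- One-dimensional bump profile. -/
def bumpProf (t : ℝ) : ℝ := Real.exp 2 * expNegInvGlue ((1 - t ^ 2 / 4) / 2)

lemma bumpProf_zero : bumpProf 0 = 1 := by
  unfold bumpProf expNegInvGlue
  norm_num [← Real.exp_add]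

lemma bumpProf_nonneg (t : ℝ) : 0 ≤ bumpProf t :=
  mul_nonneg (Real.exp_pos _).le (expNegInvGlue.nonneg _)

lemma bumpProf_eq_zero {t : ℝ} (ht : 2 ≤ t) : bumpProf t = 0 := by
  unfold bumpProf
  rw [expNegInvGlue.zero_of_nonpos (by nlinarith), mul_zero]

lemma poly_exp_bound {x : ℝ} (hx : 0 ≤ x) :
    4 * x * (1 + x) ^ 3 ≤ (99 / 100) ^ 2 * Real.exp (4 * x) := by
  have h := Real.sum_le_exp_of_nonneg (x := 4 * x) (by positivity) 6
  simp only [Finset.sum_range_succ, Finset.sum_range_zero, Nat.factorial] at h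
  norm_num at h
  have : 4 * x * (1 + x) ^ 3 ≤ (99 / 100) ^ 2 * (1 + 4 * x + (4 * x) ^ 2 / 2 + (4 * x) ^ 3 / 6
      + (4 * x) ^ 4 / 24 + (4 * x) ^ 5 / 120) := by
    nlinarith [mul_nonneg hx (sq_nonneg (x ^ 2 - 3 / 10)), sq_nonneg (x ^ 2 - 3 / 10),
      mul_nonneg hx (sq_nonneg (x - 11 / 20)), sq_nonneg (x ^ 2 - 11 / 20 * x),
      sq_nonneg (x - 11 / 20), mul_nonneg hx (sq_nonneg (x ^ 2 - 11 / 20 * x)), pow_nonneg hx 5]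
  linarith

lemma bumpProf_hasDerivAt (t : ℝ) :
    HasDerivAt bumpProf
      (Real.exp 2 * ((((1 - t ^ 2 / 4) / 2)⁻¹) ^ 2 * expNegInvGlue ((1 - t ^ 2 / 4) / 2)
        * (-t / 4))) t := by
  have h := expNegInvGlue.hasDerivAt_polynomial_eval_inv_mul 1 ((1 - t ^ 2 / 4) / 2)
  simp at h
  have h2 : HasDerivAt (fun t : ℝ => (1 - t ^ 2 / 4) / 2) (-t / 4) t := by
    have := (((hasDerivAt_pow 2 t).div_const 4).const_sub 1).div_const 2
    refine this.congr_deriv ?_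
    norm_num
    try ring
  have h3 := (h.comp t h2).const_mul (Real.exp 2)
  refine HasDerivAt.congr_deriv (f := bumpProf) h3 ?_
  simp

lemma bumpProf_deriv_bound (t : ℝ) :
    |Real.exp 2 * ((((1 - t ^ 2 / 4) / 2)⁻¹) ^ 2 * expNegInvGlue ((1 - t ^ 2 / 4) / 2)
        * (-t / 4))| ≤ 99 / 100 := by
  by_cases hs : 1 - t ^ 2 / 4 ≤ 0
  · rw [expNegInvGlue.zero_of_nonpos (by linarith)]
    norm_num
  push Not at hs
  obtain ⟨u, hu⟩ : ∃ u, u = (1 - t ^ 2 / 4)⁻¹ := ⟨_, rfl⟩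
  have hu0 : 0 < u := by rw [hu]; positivity
  have hus : u * (1 - t ^ 2 / 4) = 1 := by rw [hu]; exact inv_mul_cancel₀ hs.ne'
  have hu1 : 1 ≤ u := by nlinarith [mul_nonneg hu0.le (sq_nonneg t)]
  have hinv : ((1 - t ^ 2 / 4) / 2)⁻¹ = 2 * u := by
    rw [hu, inv_div]; rfl
  have hg : expNegInvGlue ((1 - t ^ 2 / 4) / 2) = Real.exp (-(2 * u)) := by
    unfold expNegInvGlue
    rw [if_neg (by linarith), hinv]
  rw [hinv, hg]
  refine abs_le_of_sq_le_sq ?_ (by norm_num)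
  have hb := poly_exp_bound (x := u - 1) (by linarith)
  have he : Real.exp (4 * (u - 1)) * (Real.exp 2 * Real.exp (-(2 * u))) ^ 2 = 1 := by
    rw [← Real.exp_add, ← Real.exp_nat_mul, ← Real.exp_add]
    apply Real.exp_eq_one_iff _ |>.mpr
    push_cast
    ring
  have ht : u * t ^ 2 = 4 * (u - 1) := by linarith
  have e1 : (Real.exp 2 * ((2 * u) ^ 2 * Real.exp (-(2 * u)) * (-t / 4))) ^ 2
      = (u * t ^ 2) * u ^ 3 * (Real.exp 2 * Real.exp (-(2 * u))) ^ 2 := by ring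
  rw [e1, ht]
  have h0 := sq_nonneg (Real.exp 2 * Real.exp (-(2 * u)))
  have := mul_le_mul_of_nonneg_right hb h0
  rw [mul_assoc ((99 / 100 : ℝ) ^ 2), he] at this
  calc _ = 4 * (u - 1) * (1 + (u - 1)) ^ 3 * (Real.exp 2 * Real.exp (-(2 * u))) ^ 2 := by ring
    _ ≤ _ := by linarith

lemma bumpProf_lip (s t : ℝ) : |bumpProf s - bumpProf t| ≤ 99 / 100 * |s - t| := by
  have := Convex.norm_image_sub_le_of_norm_hasDerivWithin_le (f := bumpProf) (s := univ)
    (x := t) (y := s) (C := 99 / 100)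
    (fun x _ => (bumpProf_hasDerivAt x).hasDerivWithinAt)
    (fun x _ => bumpProf_deriv_bound x) convex_univ (mem_univ _) (mem_univ _)
  simpa using this

section
variable {n : ℕ}

/-- lattice point -/
def latPt (n : ℕ) (r : ℝ) (j : Fin n → ℤ) : Euc n := WithLp.toLp 2 fun k => 4 * r * (j k : ℝ)

/-- one localized displacement -/
def oneBump (r : ℝ) (p : (Fin n → ℤ) → Euc n) (j : Fin n → ℤ) (y : Euc n) : Euc n :=
  bumpProf (‖y - latPt n r j‖ / r) • (p j - latPt n r j)

/-- total displacement -/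
def dispF (r : ℝ) (p : (Fin n → ℤ) → Euc n) (y : Euc n) : Euc n := ∑ᶠ j, oneBump r p j y

lemma latPt_dist {r : ℝ} (hr : 0 < r) {i j : Fin n → ℤ} (hij : i ≠ j) :
    4 * r ≤ ‖latPt n r i - latPt n r j‖ := by
  obtain ⟨k, hk⟩ := Function.ne_iff.mp hij
  have h1 := PiLp.norm_apply_le (latPt n r i - latPt n r j) k
  have h2 : (latPt n r i - latPt n r j) k = 4 * r * ((i k - j k : ℤ) : ℝ) := by
    simp [latPt]; ring
  rw [h2, Real.norm_eq_abs, abs_mul, abs_of_pos (by positivity : 0 < 4 * r)] at h1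
  have h3 : (1 : ℝ) ≤ |((i k - j k : ℤ) : ℝ)| := by
    rw [← Int.cast_abs]
    exact_mod_cast Int.one_le_abs (sub_ne_zero.mpr hk)
  nlinarith

lemma oneBump_zero {r : ℝ} (hr : 0 < r) (p : (Fin n → ℤ) → Euc n) {j : Fin n → ℤ} {y : Euc n}
    (h : 2 * r ≤ ‖y - latPt n r j‖) : oneBump r p j y = 0 := by
  unfold oneBump
  rw [bumpProf_eq_zero (by rwa [le_div_iff₀ hr]), zero_smul]

lemma dispF_eq {r : ℝ} (hr : 0 < r) (p : (Fin n → ℤ) → Euc n) {i : Fin n → ℤ} {y : Euc n}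
    (h : ‖y - latPt n r i‖ < 2 * r) : dispF r p y = oneBump r p i y := by
  unfold dispF
  apply finsum_eq_single
  intro j hj
  apply oneBump_zero hr
  have h1 := latPt_dist hr hj
  have h2 := norm_sub_le_norm_sub_add_norm_sub (latPt n r j) y (latPt n r i)
  rw [norm_sub_rev (latPt n r j) y] at h2
  linarith

lemma dispF_eq_zero {r : ℝ} (hr : 0 < r) (p : (Fin n → ℤ) → Euc n) {y : Euc n}
    (h : ∀ i, 2 * r ≤ ‖y - latPt n r i‖) : dispF r p y = 0 := by
  unfold dispF
  rw [finsum_congr (fun i => oneBump_zero hr p (h i)), finsum_zero]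

lemma oneBump_lip {r : ℝ} (hr : 0 < r) (p : (Fin n → ℤ) → Euc n) (j : Fin n → ℤ)
    (hp : ‖p j - latPt n r j‖ ≤ r) (y z : Euc n) :
    ‖oneBump r p j y - oneBump r p j z‖ ≤ 99 / 100 * ‖y - z‖ := by
  unfold oneBump
  rw [← sub_smul, norm_smul, Real.norm_eq_abs]
  have h1 := bumpProf_lip (‖y - latPt n r j‖ / r) (‖z - latPt n r j‖ / r)
  rw [← sub_div, abs_div, abs_of_pos hr] at h1
  have h2 := abs_norm_sub_norm_le (y - latPt n r j) (z - latPt n r j)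
  rw [sub_sub_sub_cancel_right] at h2
  have h3 : |‖y - latPt n r j‖ - ‖z - latPt n r j‖| / r * r = |‖y - latPt n r j‖ - ‖z - latPt n r j‖| :=
    div_mul_cancel₀ _ hr.ne'
  calc _ ≤ (99 / 100 * (|‖y - latPt n r j‖ - ‖z - latPt n r j‖| / r)) * r :=
        mul_le_mul h1 hp (norm_nonneg _) (by positivity)
    _ ≤ _ := by rw [mul_assoc, h3]; linarith

lemma oneBump_le {r : ℝ} (hr : 0 < r) (p : (Fin n → ℤ) → Euc n) (j : Fin n → ℤ)
    (hp : ‖p j - latPt n r j‖ ≤ r) {y : Euc n} (h : ‖y - latPt n r j‖ < 2 * r) :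
    ‖oneBump r p j y‖ ≤ 99 / 100 * (2 * r - ‖y - latPt n r j‖) := by
  unfold oneBump
  rw [norm_smul, Real.norm_eq_abs]
  have h1 := bumpProf_lip (‖y - latPt n r j‖ / r) 2
  have h4 : ‖y - latPt n r j‖ / r < 2 := by rwa [div_lt_iff₀ hr]
  rw [bumpProf_eq_zero le_rfl, sub_zero, abs_of_neg (by linarith : ‖y - latPt n r j‖ / r - 2 < 0)] at h1
  have h3 : ‖y - latPt n r j‖ / r * r = ‖y - latPt n r j‖ := div_mul_cancel₀ _ hr.ne'
  calc _ ≤ (99 / 100 * (-(‖y - latPt n r j‖ / r - 2))) * r :=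
        mul_le_mul h1 hp (norm_nonneg _) (by linarith)
    _ ≤ _ := by rw [mul_assoc, neg_mul, sub_mul, h3]; linarith

lemma dispF_lip {r : ℝ} (hr : 0 < r) (p : (Fin n → ℤ) → Euc n)
    (hp : ∀ j, ‖p j - latPt n r j‖ ≤ r) (y z : Euc n) :
    ‖dispF r p y - dispF r p z‖ ≤ 99 / 100 * ‖y - z‖ := by
  by_cases hy : ∃ i, ‖y - latPt n r i‖ < 2 * r
  · obtain ⟨i, hi⟩ := hy
    rw [dispF_eq hr p hi]
    by_cases hz : ∃ j, ‖z - latPt n r j‖ < 2 * r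
    · obtain ⟨j, hj⟩ := hz
      rw [dispF_eq hr p hj]
      by_cases hij : i = j
      · subst hij
        exact oneBump_lip hr p i (hp i) y z
      · have h1 := oneBump_le hr p i (hp i) hi
        have h2 := oneBump_le hr p j (hp j) hj
        have h3 := latPt_dist hr hij
        have h4 := norm_sub_le (oneBump r p i y) (oneBump r p j z)
        have h5 := norm_sub_le_norm_sub_add_norm_sub (latPt n r i) y (latPt n r j)
        have h6 := norm_sub_le_norm_sub_add_norm_sub y z (latPt n r j)
        rw [norm_sub_rev (latPt n r i) y] at h5
        linarith
    · push Not at hz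
      rw [dispF_eq_zero hr p hz, ← oneBump_zero hr p (hz i)]
      exact oneBump_lip hr p i (hp i) y z
  · push Not at hy
    rw [dispF_eq_zero hr p hy]
    by_cases hz : ∃ j, ‖z - latPt n r j‖ < 2 * r
    · obtain ⟨j, hj⟩ := hz
      rw [dispF_eq hr p hj, ← oneBump_zero hr p (hy j)]
      exact oneBump_lip hr p j (hp j) y z
    · push Not at hz
      rw [dispF_eq_zero hr p hz]
      simp

lemma oneBump_contDiff (r : ℝ) (p : (Fin n → ℤ) → Euc n) (j : Fin n → ℤ) :
    ContDiff ℝ (⊤ : ℕ∞) (oneBump r p j) := by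
  unfold oneBump bumpProf
  refine ContDiff.fun_smul ?_ contDiff_const
  refine contDiff_const.mul ?_
  refine expNegInvGlue.contDiff.comp ?_
  simp only [div_pow]
  have : ContDiff ℝ (⊤ : ℕ∞) (fun y : Euc n => ‖y - latPt n r j‖ ^ 2) :=
    (contDiff_id.sub contDiff_const).norm_sq ℝ
  exact (contDiff_const.sub ((this.div_const _).div_const _)).div_const _

lemma dispF_contDiff {r : ℝ} (hr : 0 < r) (p : (Fin n → ℤ) → Euc n) :
    ContDiff ℝ (⊤ : ℕ∞) (dispF r p) := by
  rw [← contMDiff_iff_contDiff]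
  apply contMDiff_finsum
  · intro i
    rw [contMDiff_iff_contDiff]
    exact oneBump_contDiff r p i
  · intro y
    refine ⟨ball y r, ball_mem_nhds y hr, ?_⟩
    apply (Set.finite_Icc (fun k => ⌊y k / (4 * r)⌋ - 1) (fun k => ⌈y k / (4 * r)⌉ + 1)).subset
    rintro j ⟨z, hz, hzy⟩
    have hlt : ‖z - latPt n r j‖ < 2 * r := by
      by_contra hc
      exact hz (oneBump_zero hr p (not_lt.mp hc))
    rw [mem_ball, dist_eq_norm] at hzy
    have h1 : ‖y - latPt n r j‖ < 4 * r := by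
      have := norm_sub_le_norm_sub_add_norm_sub y z (latPt n r j)
      rw [norm_sub_rev y z] at this
      linarith
    have key : ∀ k, |y k / (4 * r) - j k| < 1 := by
      intro k
      have h2 := PiLp.norm_apply_le (y - latPt n r j) k
      have h3 : (y - latPt n r j) k = (y k / (4 * r) - j k) * (4 * r) := by
        simp [latPt]; field_simp
      rw [h3, Real.norm_eq_abs, abs_mul, abs_of_pos (by positivity : 0 < 4 * r)] at h2
      by_contra hc
      nlinarith
    constructor
    · intro k
      have h := abs_lt.mp (key k)
      have h' := Int.floor_le (y k / (4 * r))
      have : ((⌊y k / (4 * r)⌋ - 1 : ℤ) : ℝ) < j k := by push_cast; linarith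
      exact (Int.cast_lt.mp this).le
    · intro k
      have h := abs_lt.mp (key k)
      have h' := Int.le_ceil (y k / (4 * r))
      have : (j k : ℝ) < ((⌈y k / (4 * r)⌉ + 1 : ℤ) : ℝ) := by push_cast; linarith
      exact (Int.cast_lt.mp this).le

/-- A smooth perturbation of the identity by a contraction is a diffeomorphism. -/
lemma exists_homeo [Nontrivial (Euc n)] (F : Euc n → Euc n) (hF : ContDiff ℝ (⊤ : ℕ∞) F)
    (hl : ∀ y z, ‖F y - F z‖ ≤ 99 / 100 * ‖y - z‖) :
    ∃ e : Euc n ≃ₜ Euc n, (∀ y, e y = y + F y) ∧ ContDiff ℝ (⊤ : ℕ∞) e.symm := by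
  have ha : ApproximatesLinearOn (fun y => y + F y)
      ((ContinuousLinearEquiv.refl ℝ (Euc n) : Euc n ≃L[ℝ] Euc n) : Euc n →L[ℝ] Euc n) univ
      (99 / 100) := by
    intro x _ y _
    have := hl x y
    simpa [add_sub_add_comm] using this
  have hc : Subsingleton (Euc n) ∨ (99 / 100 : NNReal) <
      ‖((ContinuousLinearEquiv.refl ℝ (Euc n)).symm : Euc n →L[ℝ] Euc n)‖₊⁻¹ := by
    right
    have : ‖((ContinuousLinearEquiv.refl ℝ (Euc n)).symm : Euc n →L[ℝ] Euc n)‖₊ = 1 := by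
      ext
      simp
    rw [this, inv_one]
    rw [div_lt_one (by norm_num)]; norm_num
  have hlip : LipschitzWith (99 / 100) F := by
    apply LipschitzWith.of_dist_le_mul
    intro x y
    simpa [dist_eq_norm] using hl x y
  have hd : ∀ a, HasFDerivAt (fun y => y + F y) (ContinuousLinearMap.id ℝ _ + fderiv ℝ F a) a :=
    fun a => (hasFDerivAt_id a).add (hF.differentiable (by simp) a).hasFDerivAt
  have hinj : ∀ a, Function.Injective
      ((ContinuousLinearMap.id ℝ _ + fderiv ℝ F a : Euc n →L[ℝ] Euc n) : Euc n →ₗ[ℝ] Euc n) := by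
    intro a
    rw [injective_iff_map_eq_zero]
    intro v hv
    have h1 : v = - fderiv ℝ F a v := eq_neg_of_add_eq_zero_left hv
    have h2 := (fderiv ℝ F a).le_of_opNorm_le
      (norm_fderiv_le_of_lipschitz ℝ hlip (x₀ := a)) v
    have h3 : ‖v‖ = ‖fderiv ℝ F a v‖ := by
      conv_lhs => rw [h1, norm_neg]
    push_cast at h2
    rw [← norm_le_zero_iff]
    linarith
  refine ⟨ha.toHomeomorph _ hc, fun y => rfl, ?_⟩
  apply Homeomorph.contDiff_symm (f₀' := fun a =>
    (LinearEquiv.ofInjectiveEndo _ (hinj a)).toContinuousLinearEquiv)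
  · intro a
    refine HasFDerivAt.congr_fderiv (hd a) ?_
    ext1 v
    rfl
  · exact contDiff_id.add hF

end

/-- For every positive integer `n` there is `α_n > 0` such that: for every `r > 0` and every
choice of points `p_j ∈ B((4rj₁, …, 4rj_n), r)` (`j ∈ ℤⁿ`), there is a smooth diffeomorphism
`ψ : ℝⁿ ∖ {p_j} → ℝⁿ ∖ 4rℤⁿ` with `‖v‖² ≤ α_n ‖Dψ_x(v)‖²` for all `x` and `v`,
i.e. the flat metric is bounded by `α_n` times the pullback of the flat metric under `ψ`. -/
theorem exists_diffeo_to_lattice_complement (n : ℕ) (hn : 0 < n) :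
    ∃ α : ℝ, 0 < α ∧
      ∀ r : ℝ, 0 < r →
      ∀ p : (Fin n → ℤ) → Euc n,
        (∀ j : Fin n → ℤ, p j ∈ ball (show Euc n from WithLp.toLp 2 fun k => 4 * r * (j k : ℝ)) r) →
        ∃ ψ φ : Euc n → Euc n,
          ContDiffOn ℝ (⊤ : ℕ∞) ψ (range p)ᶜ ∧
          InjOn ψ (range p)ᶜ ∧
          ψ '' (range p)ᶜ = (scaledLattice n r)ᶜ ∧
          ContDiffOn ℝ (⊤ : ℕ∞) φ (scaledLattice n r)ᶜ ∧
          (∀ x ∈ (range p)ᶜ, φ (ψ x) = x) ∧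
          (∀ y ∈ (scaledLattice n r)ᶜ, ψ (φ y) = y) ∧
          ∀ x ∈ (range p)ᶜ, ∀ v : Euc n, ‖v‖ ^ 2 ≤ α * ‖fderiv ℝ ψ x v‖ ^ 2 := by
  refine ⟨4, by norm_num, ?_⟩
  intro r hr p hp
  have : Nonempty (Fin n) := ⟨⟨0, hn⟩⟩
  have : Nontrivial (Euc n) := inferInstance
  have hp' : ∀ j, ‖p j - latPt n r j‖ ≤ r := fun j => by
    have := hp j
    rw [mem_ball, dist_eq_norm] at this
    exact this.le
  have hF := dispF_contDiff hr p
  have hl := dispF_lip hr p hp'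
  obtain ⟨e, he, hes⟩ := exists_homeo (dispF r p) hF hl
  have hec : ContDiff ℝ (⊤ : ℕ∞) e := by
    have : (e : Euc n → Euc n) = fun y => y + dispF r p y := funext he
    rw [this]
    exact contDiff_id.add hF
  have hlat : ∀ j, e (latPt n r j) = p j := by
    intro j
    rw [he, dispF_eq hr p (i := j) (by simpa using hr)]
    simp [oneBump, bumpProf_zero]
  have hlip : LipschitzWith 2 e := by
    apply LipschitzWith.of_dist_le_mul
    intro x y
    rw [dist_eq_norm, dist_eq_norm, he, he, add_sub_add_comm]
    have h1 := norm_add_le (x - y) (dispF r p x - dispF r p y)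
    have h2 := hl x y
    have h3 := norm_nonneg (x - y)
    push_cast
    linarith
  have hmem : ∀ y, e y ∈ range p ↔ y ∈ scaledLattice n r := by
    intro y
    constructor
    · rintro ⟨j, hj⟩
      rw [← hlat j] at hj
      have := e.injective hj
      exact ⟨j, by rw [← this]; rfl⟩
    · rintro ⟨j, hj⟩
      have : y = latPt n r j := by
        ext k
        exact congrFun hj k
      exact ⟨j, by rw [this, hlat]⟩
  refine ⟨e.symm, e, hes.contDiffOn, e.symm.injective.injOn, ?_, hec.contDiffOn,
    fun x _ => e.apply_symm_apply x, fun y _ => e.symm_apply_apply y, ?_⟩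
  · ext y
    constructor
    · rintro ⟨x, hx, rfl⟩ hy
      rw [← hmem, e.apply_symm_apply] at hy
      exact hx hy
    · intro hy
      exact ⟨e y, fun h => hy ((hmem y).mp h), e.symm_apply_apply y⟩
  · intro x _ v
    have h1 : HasFDerivAt e.symm (fderiv ℝ e.symm x) x :=
      (hes.differentiable (by simp) x).hasFDerivAt
    have h2 : HasFDerivAt e (fderiv ℝ e (e.symm x)) (e.symm x) :=
      (hec.differentiable (by simp) _).hasFDerivAt
    have h3 := h2.comp x h1
    have h4 : (e ∘ e.symm : Euc n → Euc n) = id := funext e.apply_symm_apply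
    rw [h4] at h3
    have h5 := h3.unique (hasFDerivAt_id x)
    have h6 := (fderiv ℝ e (e.symm x)).le_of_opNorm_le
      (norm_fderiv_le_of_lipschitz ℝ hlip (x₀ := e.symm x)) (fderiv ℝ e.symm x v)
    have h7 : fderiv ℝ e (e.symm x) (fderiv ℝ e.symm x v) = v :=
      DFunLike.congr_fun h5 v
    rw [h7] at h6
    push_cast at h6
    nlinarith [norm_nonneg v, norm_nonneg (fderiv ℝ e.symm x v)]
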